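/- arXiv:2208.05405 — 4 statements merged into one kernel-verified Lean document; each statement's English description precedes it below -/
import Mathlib

section
/- Let m, n be positive integers, let A = (a_{ij}) be an m × n real matrix, let b = (β_1, …, β_n) ∈ ℝ^n, let s > 0 be real, let B = sI + (1/2)AᵀA, and let q = e^{−s}. Define F_{A,b,s} : ℝ^m → ℝ₊ by F_{A,b,s}(t) = ∏_{j=1}^n ∏_{k=1}^∞ (1 + 2 q^{2k−1} cos(β_j + Σ_{i=1}^m a_{ij} τ_i) + q^{4k−2}) for t = (τ_1, …, τ_m). Then (2π)^{−m/2} · (∏_{k=1}^∞ (1 − q^{2k}))^n · ∫_{ℝ^m} F_{A,b,s}(t) e^{−‖t‖²/2} dt = Σ_{x ∈ ℤ^n} exp(−⟨Bx, x⟩ + i⟨b, x⟩), where the sum is a complex number and the stated identity holds as complex numbers (the left-hand side being real). -/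
open scoped Matrix

/-!
Jacobi's triple product with `z = e^{iθ}` turns `∏ (1 - q^{2k}) (1 + 2 q^{2k-1} cos θ + q^{4k-2})`
into `∑ q^{j²} e^{ijθ}`. Taking `θ_j = β_j + ∑ a_{ij} τ_i` and multiplying over `j` writes the
integrand as an absolutely convergent sum over `x ∈ ℤⁿ` of exponentials
`e^{-s‖x‖² + i⟨b, x⟩} e^{i⟨Ax, t⟩}`, and the Gaussian integral replaces `e^{i⟨Ax, t⟩}` by
`e^{-‖Ax‖²/2}`.

The triple product itself is the limit of the `q`-binomial theorem: centred at its middle term it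
is a finite triple product whose coefficients are Gaussian binomials, which are bounded and all
converge to the same constant `∏ (1 - q^{2k})⁻¹`, so dominated convergence applies.
-/

open Filter Topology Finset

section GaussBinom

variable {R : Type*} [CommSemiring R]

/-- The Gaussian binomial coefficient `[n, k]_q`, defined by a Pascal recursion so that it makes
sense for every `q` (also at roots of unity, where the quotient of `q`-factorials does not). -/
def gaussBinom (q : R) : ℕ → ℕ → R
  | _, 0 => 1
  | 0, _ + 1 => 0
  | n + 1, k + 1 => gaussBinom q n k + q ^ (k + 1) * gaussBinom q n (k + 1)

@[simp]
lemma gaussBinom_zero_right (q : R) (n : ℕ) : gaussBinom q n 0 = 1 := by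
  simp [gaussBinom]

lemma gaussBinom_succ_succ (q : R) (n k : ℕ) :
    gaussBinom q (n + 1) (k + 1) = gaussBinom q n k + q ^ (k + 1) * gaussBinom q n (k + 1) := by
  rw [gaussBinom]

lemma gaussBinom_eq_zero_of_lt (q : R) {n k : ℕ} (h : n < k) : gaussBinom q n k = 0 := by
  induction n generalizing k with
  | zero => obtain ⟨k, rfl⟩ := Nat.exists_eq_add_one.2 h; rw [gaussBinom]
  | succ n ih =>
    obtain ⟨k, rfl⟩ := Nat.exists_eq_add_one.2 (Nat.zero_lt_of_lt h)
    rw [gaussBinom_succ_succ, ih (by lia), ih (by lia), mul_zero, add_zero]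

@[simp]
lemma gaussBinom_self (q : R) (n : ℕ) : gaussBinom q n n = 1 := by
  induction n with
  | zero => simp
  | succ n ih => simp [gaussBinom_succ_succ, ih, gaussBinom_eq_zero_of_lt]

theorem prod_one_add_pow_mul_eq_sum_gaussBinom (q x : R) (n : ℕ) :
    ∏ k ∈ range n, (1 + q ^ k * x) =
      ∑ k ∈ range (n + 1), gaussBinom q n k * q ^ k.choose 2 * x ^ k := by
  induction n generalizing x with
  | zero => simp
  | succ n ih =>
    set S := ∑ k ∈ range (n + 1), gaussBinom q n k * q ^ k.choose 2 * (q * x) ^ k with hS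
    have hshift : ∏ k ∈ range n, (1 + q ^ (k + 1) * x) = S := by
      simp_rw [hS, ← ih, ← mul_assoc, pow_succ]
    have htail : S = ∑ k ∈ range (n + 1),
        gaussBinom q n (k + 1) * q ^ (k + 1).choose 2 * (q * x) ^ (k + 1) + 1 := by
      rw [hS, sum_range_succ', sum_range_succ _ n, gaussBinom_eq_zero_of_lt q n.lt_succ_self]
      simp
    have hterm (k : ℕ) : gaussBinom q (n + 1) (k + 1) * q ^ (k + 1).choose 2 * x ^ (k + 1) =
        gaussBinom q n k * q ^ k.choose 2 * (q * x) ^ k * x +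
          gaussBinom q n (k + 1) * q ^ (k + 1).choose 2 * (q * x) ^ (k + 1) := by
      rw [gaussBinom_succ_succ, Nat.choose_succ_succ' k 1, Nat.choose_one_right]
      ring
    calc ∏ k ∈ range (n + 1), (1 + q ^ k * x)
        = S * x + S := by rw [prod_range_succ', hshift]; ring
      _ = ∑ k ∈ range (n + 1), gaussBinom q (n + 1) (k + 1) * q ^ (k + 1).choose 2 * x ^ (k + 1)
          + 1 := by
        nth_rewrite 2 [htail]
        simp_rw [hterm, sum_add_distrib, hS, sum_mul, add_assoc]
      _ = _ := by simp [sum_range_succ' _ (n + 1)]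

end GaussBinom

/-- The `q`-Pochhammer symbol `(q; q)_n = (1 - q) (1 - q²) ⋯ (1 - qⁿ)`, which plays the role of
`n!` for Gaussian binomials. -/
def qPochhammer {R : Type*} [CommRing R] (q : R) (n : ℕ) : R := ∏ i ∈ range n, (1 - q ^ (i + 1))

lemma qPochhammer_succ {R : Type*} [CommRing R] (q : R) (n : ℕ) :
    qPochhammer q (n + 1) = qPochhammer q n * (1 - q ^ (n + 1)) :=
  prod_range_succ _ _

theorem gaussBinom_add_mul_qPochhammer {R : Type*} [CommRing R] (q : R) (k l : ℕ) :
    gaussBinom q (k + l) k * (qPochhammer q k * qPochhammer q l) = qPochhammer q (k + l) := by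
  induction k generalizing l with
  | zero => simp [qPochhammer]
  | succ k ihk =>
    induction l with
    | zero => simp [qPochhammer]
    | succ l ihl =>
      have hk := ihk (l + 1)
      rw [show k + (l + 1) = k + 1 + l by ring] at hk
      rw [← add_assoc, gaussBinom_succ_succ, qPochhammer_succ q (k + 1 + l)]
      simp only [qPochhammer_succ q k, qPochhammer_succ q l] at hk ihl ⊢
      linear_combination (1 - q ^ (k + 1)) * hk + q ^ (k + 1) * (1 - q ^ (l + 1)) * ihl

lemma sq_pow_choose_two_mul_pow {M : Type*} [Monoid M] (q : M) (k : ℕ) :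
    (q ^ 2) ^ k.choose 2 * q ^ k = q ^ k ^ 2 := by
  rw [← pow_mul, ← pow_add]
  congr 1
  induction k with
  | zero => rfl
  | succ k ih => rw [Nat.choose_succ_succ' k 1, Nat.choose_one_right]; lia

section FiniteTripleProduct

variable {K : Type*} [Field K] {q z : K}

-- Substituting `q z / q^{2M}` for the variable of the `q`-binomial theorem with base `q²` makes its
-- first `M` factors, read backwards, the factors in `z⁻¹` of the triple product.
lemma pow_sq_mul_prod_one_add_div (hq : q ≠ 0) (hz : z ≠ 0) (M : ℕ) :
    q ^ M ^ 2 * ∏ k ∈ range M, (1 + (q ^ 2) ^ k * (q * z / (q ^ 2) ^ M)) =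
      z ^ M * ∏ k ∈ range M, (1 + q ^ (2 * k + 1) * z⁻¹) := by
  rw [← prod_range_reflect]
  have hodd : q ^ M ^ 2 = ∏ k ∈ range M, q ^ (2 * k + 1) := by
    rw [prod_pow_eq_pow_sum]
    congr 1
    induction M with
    | zero => rfl
    | succ M ih => rw [sum_range_succ, ← ih]; ring
  have hconst : z ^ M = ∏ _k ∈ range M, z := by simp
  rw [hodd, hconst, ← prod_mul_distrib, ← prod_mul_distrib]
  refine prod_congr rfl fun k hk => ?_
  obtain ⟨l, rfl⟩ := Nat.exists_eq_add_of_lt (mem_range.1 hk)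
  rw [show k + l + 1 - 1 - k = l by lia]
  field_simp
  ring

lemma sq_pow_choose_two_mul_div_pow (hq : q ≠ 0) (hz : z ≠ 0) (M k : ℕ) :
    (q ^ 2) ^ k.choose 2 * (q * z / (q ^ 2) ^ M) ^ k * q ^ M ^ 2 =
      z ^ M * (q ^ ((k : ℤ) - M) ^ 2 * z ^ ((k : ℤ) - M)) := by
  have hsquare : q ^ ((k : ℤ) - M) ^ 2 * q ^ (2 * M * k) = q ^ k ^ 2 * q ^ M ^ 2 := by
    simp only [← zpow_natCast, ← zpow_add₀ hq]
    congr 1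
    push_cast
    ring
  rw [zpow_sub₀ hz, zpow_natCast, zpow_natCast]
  calc _ = q ^ k ^ 2 * q ^ M ^ 2 / q ^ (2 * M * k) * z ^ k := by
        rw [← sq_pow_choose_two_mul_pow q k]
        simp only [div_pow, mul_pow, ← pow_mul]
        field_simp
    _ = _ := by
        rw [← hsquare]
        field_simp

theorem finite_jacobi_triple_product (hq : q ≠ 0) (hz : z ≠ 0) (M N : ℕ) :
    (∏ k ∈ range M, (1 + q ^ (2 * k + 1) * z⁻¹)) * ∏ k ∈ range N, (1 + q ^ (2 * k + 1) * z) =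
      ∑ j ∈ Icc (-M : ℤ) N, gaussBinom (q ^ 2) (M + N) (M + j).toNat * (q ^ j ^ 2 * z ^ j) := by
  have hupper (k : ℕ) : (q ^ 2) ^ (M + k) * (q * z / (q ^ 2) ^ M) = q ^ (2 * k + 1) * z := by
    field_simp
    ring
  refine mul_left_cancel₀ (pow_ne_zero M hz) ?_
  calc z ^ M * ((∏ k ∈ range M, (1 + q ^ (2 * k + 1) * z⁻¹)) *
          ∏ k ∈ range N, (1 + q ^ (2 * k + 1) * z))
      = q ^ M ^ 2 * ∏ k ∈ range (M + N), (1 + (q ^ 2) ^ k * (q * z / (q ^ 2) ^ M)) := by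
        simp_rw [prod_range_add, hupper]
        rw [← mul_assoc, ← mul_assoc, pow_sq_mul_prod_one_add_div hq hz]
    _ = z ^ M * ∑ k ∈ range (M + N + 1), gaussBinom (q ^ 2) (M + N) k *
          (q ^ ((k : ℤ) - M) ^ 2 * z ^ ((k : ℤ) - M)) := by
        rw [prod_one_add_pow_mul_eq_sum_gaussBinom, mul_sum, mul_sum]
        refine sum_congr rfl fun k _ => ?_
        linear_combination gaussBinom (q ^ 2) (M + N) k * sq_pow_choose_two_mul_div_pow hq hz M k
    _ = _ := by
        congr 1
        refine sum_nbij' (fun k => (k : ℤ) - M) (fun j => (M + j).toNat) ?_ ?_ ?_ ?_ ?_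
        · intro k hk; simp only [mem_range, mem_Icc] at hk ⊢; lia
        · intro k hk; simp only [mem_range, mem_Icc] at hk ⊢; lia
        · intro k _; simp
        · intro j hj; simp only [mem_Icc] at hj; lia
        · intro k _; simp

end FiniteTripleProduct

section InfiniteTripleProduct

variable {𝕜 : Type*} [NormedField 𝕜] {q z : 𝕜}

lemma summable_norm_pow_two_mul_add_one_mul (hq : ‖q‖ < 1) (z : 𝕜) :
    Summable fun k : ℕ => ‖q ^ (2 * k + 1) * z‖ := by
  have hsq : ‖q‖ ^ 2 < 1 := pow_lt_one₀ (norm_nonneg q) hq two_ne_zero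
  simpa [pow_succ, pow_mul, mul_assoc] using
    (summable_geometric_of_lt_one (by positivity) hsq).mul_right (‖q‖ * ‖z‖)

lemma summable_norm_pow_sq_mul_zpow (hq : ‖q‖ < 1) (z : 𝕜) :
    Summable fun j : ℤ => ‖q ^ j ^ 2 * z ^ j‖ := by
  have hnat (w : 𝕜) : Summable fun k : ℕ => ‖q ^ k ^ 2 * w ^ k‖ := by
    have hsmall : ∀ᶠ k : ℕ in atTop, ‖q ^ k * w‖ < 1 / 2 := by
      have := ((tendsto_pow_atTop_nhds_zero_of_norm_lt_one hq).mul_const w).norm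
      rw [zero_mul, norm_zero] at this
      exact this.eventually_lt_const one_half_pos
    refine summable_geometric_two.of_norm_bounded_eventually_nat ?_
    filter_upwards [hsmall] with k hk
    rw [norm_norm, sq, pow_mul, ← mul_pow, norm_pow]
    gcongr
  refine .of_nat_of_neg ?_ ?_
  · simpa [← zpow_natCast] using hnat z
  · simpa [← zpow_natCast] using hnat z⁻¹

lemma summable_norm_neg_pow_succ (hq : ‖q‖ < 1) : Summable fun k : ℕ => ‖-q ^ (k + 1)‖ := by
  simpa using (summable_nat_add_iff 1).2 (summable_geometric_of_lt_one (norm_nonneg q) hq)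

lemma one_sub_pow_succ_ne_zero (hq : ‖q‖ < 1) (k : ℕ) : 1 - q ^ (k + 1) ≠ 0 := fun h => by
  have := pow_lt_one₀ (norm_nonneg q) hq k.succ_ne_zero
  rw [← norm_pow, ← sub_eq_zero.1 h, norm_one] at this
  exact this.false

lemma qPochhammer_ne_zero (hq : ‖q‖ < 1) (n : ℕ) : qPochhammer q n ≠ 0 :=
  prod_ne_zero_iff.2 fun k _ => one_sub_pow_succ_ne_zero hq k

lemma gaussBinom_add_eq_div (hq : ‖q‖ < 1) (k l : ℕ) :
    gaussBinom q (k + l) k = qPochhammer q (k + l) / (qPochhammer q k * qPochhammer q l) :=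
  eq_div_of_mul_eq (mul_ne_zero (qPochhammer_ne_zero hq k) (qPochhammer_ne_zero hq l))
    (gaussBinom_add_mul_qPochhammer q k l)

variable [CompleteSpace 𝕜]

lemma tendsto_qPochhammer (hq : ‖q‖ < 1) :
    Tendsto (qPochhammer q) atTop (𝓝 (∏' k : ℕ, (1 - q ^ (k + 1)))) := by
  unfold qPochhammer
  simpa only [sub_eq_add_neg] using
    (multipliable_one_add_of_summable (f := fun k => -q ^ (k + 1))
      (summable_norm_neg_pow_succ hq)).tendsto_prod_tprod_nat

lemma tprod_one_sub_pow_succ_ne_zero (hq : ‖q‖ < 1) : ∏' k : ℕ, (1 - q ^ (k + 1)) ≠ 0 := by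
  simpa only [sub_eq_add_neg] using tprod_one_add_ne_zero_of_summable
    (f := fun k => -q ^ (k + 1))
    (fun k => by simpa only [sub_eq_add_neg] using one_sub_pow_succ_ne_zero hq k)
    (summable_norm_neg_pow_succ hq)

lemma tendsto_gaussBinom_add (hq : ‖q‖ < 1) {α : Type*} {F : Filter α} {k l : α → ℕ}
    (hk : Tendsto k F atTop) (hl : Tendsto l F atTop) :
    Tendsto (fun a => gaussBinom q (k a + l a) (k a)) F
      (𝓝 (∏' k : ℕ, (1 - q ^ (k + 1)))⁻¹) := by
  have hP := tprod_one_sub_pow_succ_ne_zero hq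
  have hlim := tendsto_qPochhammer hq
  simp_rw [gaussBinom_add_eq_div hq]
  rw [← div_mul_cancel_right₀ hP]
  exact (hlim.comp (hk.atTop_add_atTop hl)).div ((hlim.comp hk).mul (hlim.comp hl))
    (mul_ne_zero hP hP)

lemma exists_norm_gaussBinom_le (hq : ‖q‖ < 1) : ∃ C, ∀ n k, ‖gaussBinom q n k‖ ≤ C := by
  have hlim := tendsto_qPochhammer hq
  obtain ⟨C, hC⟩ := (Metric.isBounded_range_of_tendsto _ hlim).exists_norm_le
  obtain ⟨D, hD⟩ := (Metric.isBounded_range_of_tendsto _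
    (hlim.inv₀ (tprod_one_sub_pow_succ_ne_zero hq))).exists_norm_le
  simp only [Set.forall_mem_range] at hC hD
  have hC0 : 0 ≤ C := (norm_nonneg _).trans (hC 0)
  have hD0 : 0 ≤ D := (norm_nonneg _).trans (hD 0)
  refine ⟨C * (D * D), fun n k => ?_⟩
  obtain h | h := lt_or_ge n k
  · rw [gaussBinom_eq_zero_of_lt q h, norm_zero]
    positivity
  · obtain ⟨l, rfl⟩ := Nat.exists_eq_add_of_le h
    rw [gaussBinom_add_eq_div hq, div_eq_mul_inv, mul_inv, norm_mul, norm_mul]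
    gcongr
    exacts [hC _, hD _, hD _]

lemma tendsto_sum_Icc_gaussBinom_mul (hq : ‖q‖ < 1) {f : ℤ → 𝕜} (hf : Summable fun j => ‖f j‖) :
    Tendsto (fun N : ℕ => ∑ j ∈ Icc (-N : ℤ) N, gaussBinom q (N + N) (N + j).toNat * f j) atTop
      (𝓝 ((∏' k : ℕ, (1 - q ^ (k + 1)))⁻¹ * ∑' j, f j)) := by
  obtain ⟨C, hC⟩ := exists_norm_gaussBinom_le hq
  simp_rw [sum_eq_tsum_indicator _ _ (.unconditional ℤ), ← tsum_mul_left]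
  refine tendsto_tsum_of_dominated_convergence (hf.mul_left C) (fun j => ?_)
    (.of_forall fun N j => ?_)
  · have hcoeff : Tendsto
        (fun N : ℕ => gaussBinom q ((N + j).toNat + (N - j).toNat) (N + j).toNat) atTop
        (𝓝 (∏' k : ℕ, (1 - q ^ (k + 1)))⁻¹) := by
      refine tendsto_gaussBinom_add hq ?_ ?_ <;>
      · refine tendsto_atTop.2 fun b => ?_
        filter_upwards [eventually_ge_atTop (b + j.natAbs)] with N hN
        lia
    refine (hcoeff.mul_const (f j)).congr' ?_
    filter_upwards [eventually_ge_atTop j.natAbs] with N hN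
    have hj : j ∈ (Icc (-N : ℤ) N : Set ℤ) := by rw [mem_coe, mem_Icc]; lia
    rw [Set.indicator_of_mem hj, show (N + j).toNat + (N - j).toNat = N + N by lia]
  · refine (norm_indicator_le_norm_self _ _).trans ?_
    rw [norm_mul]
    gcongr
    exact hC _ _

theorem jacobi_triple_product (hq : ‖q‖ < 1) (hz : z ≠ 0) :
    (∏' k : ℕ, (1 - (q ^ 2) ^ (k + 1))) *
        ∏' k : ℕ, (1 + q ^ (2 * k + 1) * z⁻¹) * (1 + q ^ (2 * k + 1) * z) =
      ∑' j : ℤ, q ^ j ^ 2 * z ^ j := by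
  obtain rfl | hq0 := eq_or_ne q 0
  · rw [tsum_eq_single 0 fun j hj => by simp [zero_zpow, hj]]
    simp
  have hq2 : ‖q ^ 2‖ < 1 := norm_pow q 2 ▸ pow_lt_one₀ (norm_nonneg q) hq two_ne_zero
  have hmul (w : 𝕜) : Multipliable fun k : ℕ => 1 + q ^ (2 * k + 1) * w :=
    multipliable_one_add_of_summable (summable_norm_pow_two_mul_add_one_mul hq w)
  have hprod := ((hmul z⁻¹).mul (hmul z)).tendsto_prod_tprod_nat
  simp_rw [Finset.prod_mul_distrib, finite_jacobi_triple_product hq0 hz] at hprod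
  rw [tendsto_nhds_unique hprod
      (tendsto_sum_Icc_gaussBinom_mul hq2 (summable_norm_pow_sq_mul_zpow hq z)),
    mul_inv_cancel_left₀ (tprod_one_sub_pow_succ_ne_zero hq2)]

end InfiniteTripleProduct

open Complex in
theorem jacobi_triple_product_cos {q : ℂ} (hq : ‖q‖ < 1) (θ : ℂ) :
    (∏' k : ℕ, (1 - q ^ (2 * k + 2))) *
        ∏' k : ℕ, (1 + 2 * q ^ (2 * k + 1) * cos θ + q ^ (4 * k + 2)) =
      ∑' j : ℤ, q ^ j ^ 2 * exp (I * θ) ^ j := by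
  rw [← jacobi_triple_product hq (exp_ne_zero _)]
  congr 1
  · exact tprod_congr fun k => by ring
  · refine tprod_congr fun k => ?_
    have hcos : exp (I * θ) + (exp (I * θ))⁻¹ = 2 * cos θ := by
      rw [two_cos, ← exp_neg, mul_comm I, neg_mul]
    have hinv : exp (I * θ) * (exp (I * θ))⁻¹ = 1 := mul_inv_cancel₀ (exp_ne_zero _)
    linear_combination (-q ^ (2 * k + 1)) * hcos - q ^ (4 * k + 2) * hinv

section PiProduct

variable {ι κ R : Type*} [Fintype ι] [NormedCommRing R] [NormOneClass R] {f : ι → κ → R}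

lemma tendsto_piFinset_const_atTop [DecidableEq ι] :
    Tendsto (fun s : Finset κ => Fintype.piFinset fun _ : ι => s) atTop atTop := by
  classical
  refine tendsto_atTop_finset_of_monotone
    (fun s t hst => Fintype.piFinset_subset _ _ fun _ => hst) fun x => ⟨univ.image x, ?_⟩
  simp [Fintype.mem_piFinset]

lemma summable_norm_prod_pi (hf : ∀ i, Summable fun k => ‖f i k‖) :
    Summable fun x : ι → κ => ‖∏ i, f i (x i)‖ := by
  classical
  refine summable_of_sum_le (c := ∏ i, ∑' k, ‖f i k‖) (fun _ => norm_nonneg _) fun u => ?_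
  obtain ⟨s, hs⟩ := (tendsto_piFinset_const_atTop.eventually_ge_atTop u).exists
  calc ∑ x ∈ u, ‖∏ i, f i (x i)‖
      ≤ ∑ x ∈ Fintype.piFinset fun _ => s, ∏ i, ‖f i (x i)‖ :=
        (sum_le_sum fun x _ => Finset.norm_prod_le _ _).trans
          (sum_le_sum_of_subset_of_nonneg hs fun _ _ _ => by positivity)
    _ = ∏ i, ∑ k ∈ s, ‖f i k‖ := (prod_univ_sum (fun _ => s) fun i k => ‖f i k‖).symm
    _ ≤ ∏ i, ∑' k, ‖f i k‖ := prod_le_prod (fun _ _ => by positivity)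
        fun i _ => (hf i).sum_le_tsum s fun _ _ => norm_nonneg _

lemma tsum_prod_pi [CompleteSpace R] (hf : ∀ i, Summable fun k => ‖f i k‖) :
    ∑' x : ι → κ, ∏ i, f i (x i) = ∏ i, ∑' k, f i k := by
  classical
  have hboxes := (summable_norm_prod_pi hf).of_norm.hasSum.comp tendsto_piFinset_const_atTop
  refine tendsto_nhds_unique hboxes ?_
  simp only [Function.comp_def, ← prod_univ_sum]
  exact tendsto_finsetProd _ fun i _ => (hf i).of_norm.hasSum

end PiProduct

theorem prod_jacobi_triple_product_cos {ι : Type*} [Fintype ι] {q : ℂ} (hq : ‖q‖ < 1)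
    (θ : ι → ℂ) :
    (∏' k : ℕ, (1 - q ^ (2 * k + 2))) ^ Fintype.card ι *
        ∏ j, ∏' k : ℕ, (1 + 2 * q ^ (2 * k + 1) * Complex.cos (θ j) + q ^ (4 * k + 2)) =
      ∑' x : ι → ℤ, ∏ j, q ^ x j ^ 2 * Complex.exp (Complex.I * θ j) ^ x j := by
  rw [tsum_prod_pi fun j => summable_norm_pow_sq_mul_zpow hq _]
  simp_rw [← jacobi_triple_product_cos hq]
  rw [Finset.prod_mul_distrib, prod_const, card_univ]

section Gaussian

open Complex MeasureTheory GaussianFourier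

variable {κ : Type*} [Fintype κ]

lemma cexp_mul_cexp_neg_sum_sq_div_two (v : κ → ℂ) (t : κ → ℝ) :
    exp (I * ∑ i, v i * t i) * exp (-(∑ i, (t i : ℂ) ^ 2) / 2) =
      exp (-(1 / 2) * ∑ i, (t i : ℂ) ^ 2 + ∑ i, I * v i * t i) := by
  rw [← exp_add, mul_sum]
  congr 1
  simp only [mul_assoc]
  ring

lemma integrable_cexp_mul_gaussian (v : κ → ℂ) :
    Integrable fun t : κ → ℝ =>
      exp (I * ∑ i, v i * t i) * exp (-(∑ i, (t i : ℂ) ^ 2) / 2) := by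
  simp_rw [cexp_mul_cexp_neg_sum_sq_div_two]
  exact integrable_cexp_neg_mul_sum_add (by norm_num) _

lemma integral_cexp_mul_gaussian (v : κ → ℂ) :
    ∫ t : κ → ℝ, exp (I * ∑ i, v i * t i) * exp (-(∑ i, (t i : ℂ) ^ 2) / 2) =
      ((2 * Real.pi) ^ (Fintype.card κ / 2 : ℝ) : ℝ) * exp (-(∑ i, v i ^ 2) / 2) := by
  simp_rw [cexp_mul_cexp_neg_sum_sq_div_two]
  rw [integral_cexp_neg_mul_sum_add (by norm_num), ofReal_cpow (by positivity)]
  congr 1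
  · push_cast
    congr 1
    ring
  · simp_rw [mul_pow, I_sq, ← mul_sum]
    congr 1
    ring

theorem integral_tsum_cexp_mul_gaussian {X : Type*} [Countable X] {c : X → ℂ}
    (hc : Summable fun x => ‖c x‖) (v : X → κ → ℝ) :
    ∫ t : κ → ℝ, (∑' x, c x * exp (I * ∑ i, (v x i : ℂ) * t i)) *
        exp (-(∑ i, (t i : ℂ) ^ 2) / 2) =
      ((2 * Real.pi) ^ (Fintype.card κ / 2 : ℝ) : ℝ) *
        ∑' x, c x * exp (-(∑ i, (v x i : ℂ) ^ 2) / 2) := by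
  have hnorm (w t : κ → ℝ) : ‖exp (I * ∑ i, (w i : ℂ) * t i)‖ = 1 := by
    simpa using norm_exp_I_mul_ofReal (∑ i, w i * t i)
  simp_rw [← tsum_mul_right, mul_assoc, ← tsum_mul_left]
  rw [← integral_tsum_of_summable_integral_norm
    fun x => (integrable_cexp_mul_gaussian fun i => v x i).const_mul (c x)]
  · simp_rw [integral_const_mul, integral_cexp_mul_gaussian, mul_left_comm]
  · simp_rw [norm_mul, hnorm, one_mul, integral_const_mul]
    exact hc.mul_right _

end Gaussian

section Bilinear

variable {ι κ R : Type*} [Fintype ι] [Fintype κ] [CommSemiring R]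

lemma sum_add_sum_mul_mul_eq_dotProduct_add (A : Matrix κ ι R) (b x : ι → R) (t : κ → R) :
    ∑ j, (b j + ∑ i, A i j * t i) * x j = b ⬝ᵥ x + A *ᵥ x ⬝ᵥ t := by
  rw [← Matrix.vecMul_transpose, ← Matrix.dotProduct_mulVec, dotProduct_comm x, ← add_dotProduct]
  rfl

lemma smul_one_add_smul_transpose_mul_self_mulVec_dotProduct_self [DecidableEq ι]
    (A : Matrix κ ι R) (s c : R) (x : ι → R) :
    (s • (1 : Matrix ι ι R) + c • (Aᵀ * A)) *ᵥ x ⬝ᵥ x =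
      s * (x ⬝ᵥ x) + c * (A *ᵥ x ⬝ᵥ A *ᵥ x) := by
  rw [Matrix.add_mulVec, Matrix.smul_mulVec, Matrix.smul_mulVec, Matrix.one_mulVec,
    add_dotProduct, smul_dotProduct, smul_dotProduct, ← Matrix.mulVec_mulVec,
    Matrix.mulVec_transpose, ← Matrix.dotProduct_mulVec]
  rfl

end Bilinear

section Theta

open Complex

variable {κ ι : Type*} [Fintype κ] [Fintype ι]

lemma prod_exp_neg_zpow_sq_mul_exp_zpow (s : ℂ) (θ : ι → ℂ) (x : ι → ℤ) :
    ∏ j, exp (-s) ^ x j ^ 2 * exp (I * θ j) ^ x j =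
      exp (-(s * ∑ j, (x j : ℂ) ^ 2) + I * ∑ j, θ j * x j) := by
  simp_rw [← exp_int_mul, ← exp_add, ← exp_sum, sum_add_distrib, mul_sum, ← sum_neg_distrib]
  push_cast
  simp only [mul_comm (_ : ℂ) (-s), mul_comm (_ : ℂ) (I * _), neg_mul, mul_assoc]

lemma exp_I_mul_sum_add_sum_mul (A : Matrix κ ι ℝ) (a : ℂ) (b : ι → ℂ) (x : ι → ℤ) (t : κ → ℝ) :
    exp (a + I * ∑ j, (b j + ∑ i, (A i j : ℂ) * t i) * x j) =
      exp (a + I * ∑ j, b j * x j) *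
        exp (I * ∑ i, ((A *ᵥ fun j => (x j : ℝ)) i : ℂ) * t i) := by
  have hsum := sum_add_sum_mul_mul_eq_dotProduct_add (A.map (↑)) b (fun j => (x j : ℂ))
    (fun i => (t i : ℂ))
  simp only [Matrix.map_apply, dotProduct, Matrix.mulVec] at hsum
  rw [← exp_add, hsum, mul_add, add_assoc]
  simp [Matrix.mulVec, dotProduct]

open MeasureTheory in
theorem stmt_0_general (A : Matrix κ ι ℝ) (b : ι → ℂ) {s q : ℂ} (hs : 0 < s.re)
    (hq : q = exp (-s)) :
    (((2 * Real.pi) ^ (-(Fintype.card κ : ℝ) / 2) : ℝ) : ℂ) *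
        (∏' k : ℕ, (1 - q ^ (2 * k + 2))) ^ Fintype.card ι *
        ∫ t : κ → ℝ, (∏ j, ∏' k : ℕ,
          (1 + 2 * q ^ (2 * k + 1) * cos (b j + ∑ i, (A i j : ℂ) * t i) + q ^ (4 * k + 2))) *
            exp (-(∑ i, (t i : ℂ) ^ 2) / 2) =
      ∑' x : ι → ℤ, exp (-(s * ∑ j, (x j : ℂ) ^ 2 +
        (∑ i, ((A *ᵥ fun j => (x j : ℝ)) i : ℂ) ^ 2) / 2) + I * ∑ j, b j * x j) := by
  have hq1 : ‖q‖ < 1 := by rwa [hq, norm_exp, neg_re, Real.exp_lt_one_iff, neg_lt_zero]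
  have hsummable : Summable fun x : ι → ℤ =>
      ‖exp (-(s * ∑ j, (x j : ℂ) ^ 2) + I * ∑ j, b j * x j)‖ := by
    simp_rw [← prod_exp_neg_zpow_sq_mul_exp_zpow, ← hq]
    exact summable_norm_prod_pi (f := fun j k => q ^ k ^ 2 * exp (I * b j) ^ k)
      fun j => summable_norm_pow_sq_mul_zpow hq1 _
  have hπ : (2 * Real.pi) ^ (-(Fintype.card κ : ℝ) / 2) *
      (2 * Real.pi) ^ (Fintype.card κ / 2 : ℝ) = 1 := by
    rw [neg_div, ← Real.rpow_add (by positivity), neg_add_cancel, Real.rpow_zero]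
  have htheta (t : κ → ℝ) : (∏' k : ℕ, (1 - q ^ (2 * k + 2))) ^ Fintype.card ι *
      ((∏ j, ∏' k : ℕ, (1 + 2 * q ^ (2 * k + 1) * cos (b j + ∑ i, (A i j : ℂ) * t i) +
        q ^ (4 * k + 2))) * exp (-(∑ i, (t i : ℂ) ^ 2) / 2)) =
      (∑' x : ι → ℤ, exp (-(s * ∑ j, (x j : ℂ) ^ 2) + I * ∑ j, b j * x j) *
        exp (I * ∑ i, ((A *ᵥ fun j => (x j : ℝ)) i : ℂ) * t i)) *
          exp (-(∑ i, (t i : ℂ) ^ 2) / 2) := by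
    rw [← mul_assoc, prod_jacobi_triple_product_cos hq1, hq]
    simp_rw [prod_exp_neg_zpow_sq_mul_exp_zpow, exp_I_mul_sum_add_sum_mul]
  rw [mul_assoc, ← integral_const_mul, funext htheta, integral_tsum_cexp_mul_gaussian hsummable,
    ← mul_assoc, ← ofReal_mul, hπ, ofReal_one, one_mul]
  refine tsum_congr fun x => ?_
  rw [← exp_add]
  congr 1
  ring

end Theta

lemma ofReal_tprod {α : Type*} (f : α → ℝ) : ((∏' a, f a : ℝ) : ℂ) = ∏' a, (f a : ℂ) :=
  Function.LeftInverse.map_tprod (g := Complex.ofRealHom) (g' := Complex.reAddGroupHom) _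
    Complex.continuous_ofReal Complex.continuous_re Complex.ofReal_re

/-- Let `A` be an `m × n` real matrix, `b ∈ ℝⁿ`, `s > 0`, `B = sI + (1/2)AᵀA` and
`q = e^{−s}`. With `F_{A,b,s}(t) = ∏_{j=1}^n ∏_{k=1}^∞
(1 + 2q^{2k−1} cos(β_j + Σ_i a_{ij}τ_i) + q^{4k−2})`, one has
`(2π)^{−m/2} (∏_{k=1}^∞ (1 − q^{2k}))^n ∫_{ℝᵐ} F_{A,b,s}(t) e^{−‖t‖²/2} dt
  = Σ_{x ∈ ℤⁿ} exp(−⟨Bx, x⟩ + i⟨b, x⟩)`,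
an identity of complex numbers whose left-hand side is real.
(Infinite products are indexed below by `k : ℕ`, with `k` corresponding to `k+1` in the
statement, so `2k−1`, `4k−2` and `2k` become `2k+1`, `4k+2` and `2k+2`.) -/
theorem stmt_0 (m n : ℕ) (hm : 0 < m) (hn : 0 < n)
    (A : Matrix (Fin m) (Fin n) ℝ) (b : Fin n → ℝ) (s : ℝ) (hs : 0 < s)
    (B : Matrix (Fin n) (Fin n) ℝ)
    (hB : B = s • (1 : Matrix (Fin n) (Fin n) ℝ) + (1 / 2 : ℝ) • (Aᵀ * A))
    (q : ℝ) (hq : q = Real.exp (-s)) :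
    (((2 * Real.pi) ^ (-(m : ℝ) / 2) * (∏' k : ℕ, (1 - q ^ (2 * k + 2))) ^ n *
        ∫ t : Fin m → ℝ,
          (∏ j, ∏' k : ℕ,
            (1 + 2 * q ^ (2 * k + 1) * Real.cos (b j + ∑ i, A i j * t i) +
              q ^ (4 * k + 2))) *
            Real.exp (-(∑ i, t i ^ 2) / 2) : ℝ) : ℂ) =
      ∑' x : Fin n → ℤ,
        Complex.exp (-(B.mulVec (fun j => (x j : ℝ)) ⬝ᵥ (fun j => (x j : ℝ)) : ℝ) +
          Complex.I * (∑ j, b j * (x j : ℝ) : ℝ)) := by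
  simp_rw [hB, smul_one_add_smul_transpose_mul_self_mulVec_dotProduct_self]
  simpa [dotProduct, ← sq, inv_mul_eq_div, ofReal_tprod, ← integral_complex_ofReal] using
    stmt_0_general A (fun j => (b j : ℂ)) (s := s) (q := q) (by simpa) (by simp [hq])
end

section
/- Let 0 < q < 1 and let α, β be real numbers. Then for every real τ, the second derivative of the function τ ↦ ln(1 + 2q cos(ατ + β) + q²) satisfies d²/dτ² ln(1 + 2q cos(ατ + β) + q²) ≤ 2α²q/(1 − q)². -/
/-!
Put `D = 1 + 2q cos x + q²`, `a = (1 - |q|)²` and `b = (1 + |q|)²`. Then `a ≤ D ≤ b`, and since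
`D'' = (1 + q²) - D` and `D'² = (D - a)(b - D)`, the second derivative of `log D` depends on `x`
only through `D`: it is `(ab - (a + b)/2 · D) / D²`. For `D ≥ a` this is at most its value at
`D = a`, which is `(b - a)/(2a) = 2|q|/(1 - |q|)²`. The affine substitution contributes the
factor `α²`.
-/

open Topology

lemma deriv_deriv_comp_mul_add {𝕜 F : Type*} [NontriviallyNormedField 𝕜]
    [NormedAddCommGroup F] [NormedSpace 𝕜 F] (f : 𝕜 → F) (a b x : 𝕜) :
    deriv (deriv fun t => f (a * t + b)) x = a ^ 2 • deriv (deriv f) (a * x + b) := by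
  have deriv_comp_affine (g : 𝕜 → F) (t : 𝕜) :
      deriv (fun s => g (a * s + b)) t = a • deriv g (a * t + b) := by
    rw [deriv_comp_mul_left a (fun s => g (s + b)), deriv_comp_add_const]
  rw [funext (deriv_comp_affine f), deriv_fun_const_smul_field, deriv_comp_affine, smul_smul, sq]

lemma deriv_deriv_log_comp {f f' : ℝ → ℝ} {f'' x : ℝ}
    (hf : ∀ᶠ t in 𝓝 x, HasDerivAt f (f' t) t) (hf' : HasDerivAt f' f'' x) (hx : f x ≠ 0) :
    deriv (deriv fun t => Real.log (f t)) x = (f'' * f x - f' x ^ 2) / f x ^ 2 := by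
  have h_first : deriv (fun t => Real.log (f t)) =ᶠ[𝓝 x] fun t => f' t / f t := by
    filter_upwards [hf, hf.self_of_nhds.continuousAt.eventually_ne hx] with t ht ht0
    exact (ht.log ht0).deriv
  rw [h_first.deriv_eq, (hf'.fun_div hf.self_of_nhds hx).deriv, sq (f' x)]

lemma sq_one_sub_abs_le_one_add_two_mul_cos_add_sq (q x : ℝ) :
    (1 - |q|) ^ 2 ≤ 1 + 2 * q * Real.cos x + q ^ 2 := by
  have h_abs : |q * Real.cos x| ≤ |q| := by
    rw [abs_mul]
    exact mul_le_of_le_one_right (abs_nonneg q) (Real.abs_cos_le_one x)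
  linarith [neg_le_of_abs_le h_abs, sq_abs q]

lemma deriv_deriv_log_one_add_two_mul_cos_add_sq {q x : ℝ}
    (hx : 1 + 2 * q * Real.cos x + q ^ 2 ≠ 0) :
    deriv (deriv fun t => Real.log (1 + 2 * q * Real.cos t + q ^ 2)) x =
      ((1 - q ^ 2) ^ 2 - (1 + q ^ 2) * (1 + 2 * q * Real.cos x + q ^ 2)) /
        (1 + 2 * q * Real.cos x + q ^ 2) ^ 2 := by
  have h_first (t : ℝ) : HasDerivAt (fun t => 1 + 2 * q * Real.cos t + q ^ 2)
      (2 * q * -Real.sin t) t :=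
    (((Real.hasDerivAt_cos t).const_mul (2 * q)).const_add 1).add_const (q ^ 2)
  have h_second : HasDerivAt (fun t => 2 * q * -Real.sin t) (2 * q * -Real.cos x) x :=
    (Real.hasDerivAt_sin x).fun_neg.const_mul (2 * q)
  rw [deriv_deriv_log_comp (.of_forall h_first) h_second hx]
  congr 1
  linear_combination (-4 * q ^ 2) * Real.sin_sq_add_cos_sq x

lemma mul_sub_half_add_mul_div_sq_le {a b d : ℝ} (ha : 0 < a) (hab : a ≤ b) (had : a ≤ d) :
    (a * b - (a + b) / 2 * d) / d ^ 2 ≤ (b - a) / (2 * a) := by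
  have hd : 0 < d := ha.trans_le had
  have hb : 0 < b := ha.trans_le hab
  have h_gap : 0 ≤ (d - a) * ((b - a) * d + 2 * a * b) :=
    mul_nonneg (sub_nonneg.2 had)
      (add_nonneg (mul_nonneg (sub_nonneg.2 hab) hd.le) (by positivity))
  rw [div_le_div_iff₀ (by positivity) (by positivity)]
  linarith

lemma deriv_deriv_log_one_add_two_mul_cos_add_sq_le {q : ℝ} (hq : |q| ≠ 1) (x : ℝ) :
    deriv (deriv fun t => Real.log (1 + 2 * q * Real.cos t + q ^ 2)) x ≤
      2 * |q| / (1 - |q|) ^ 2 := by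
  have ha : 0 < (1 - |q|) ^ 2 := sq_pos_of_ne_zero (sub_ne_zero.2 hq.symm)
  have had := sq_one_sub_abs_le_one_add_two_mul_cos_add_sq q x
  have hab : (1 - |q|) ^ 2 ≤ (1 + |q|) ^ 2 := by linarith [abs_nonneg q]
  have h_prod : (1 - q ^ 2) ^ 2 = (1 - |q|) ^ 2 * (1 + |q|) ^ 2 := by
    rw [← sq_abs q]; ring
  have h_mean : 1 + q ^ 2 = ((1 - |q|) ^ 2 + (1 + |q|) ^ 2) / 2 := by
    rw [← sq_abs q]; ring
  rw [deriv_deriv_log_one_add_two_mul_cos_add_sq (ha.trans_le had).ne', h_prod, h_mean]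
  calc _ ≤ ((1 + |q|) ^ 2 - (1 - |q|) ^ 2) / (2 * (1 - |q|) ^ 2) :=
        mul_sub_half_add_mul_div_sq_le ha hab had
    _ = 2 * |q| / (1 - |q|) ^ 2 := by
      rw [← mul_div_mul_left (2 * |q|) _ two_ne_zero]
      ring

theorem stmt_2_general {q : ℝ} (hq : |q| ≠ 1) (α β τ : ℝ) :
    deriv (deriv (fun t : ℝ => Real.log (1 + 2 * q * Real.cos (α * t + β) + q ^ 2))) τ ≤
      2 * α ^ 2 * |q| / (1 - |q|) ^ 2 := by
  rw [deriv_deriv_comp_mul_add (fun x => Real.log (1 + 2 * q * Real.cos x + q ^ 2)), smul_eq_mul]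
  calc _ ≤ α ^ 2 * (2 * |q| / (1 - |q|) ^ 2) :=
        mul_le_mul_of_nonneg_left
          (deriv_deriv_log_one_add_two_mul_cos_add_sq_le hq _) (sq_nonneg α)
    _ = 2 * α ^ 2 * |q| / (1 - |q|) ^ 2 := by ring

/-- Let `0 < q < 1` and `α, β` be real. Then for every real `τ`,
`d²/dτ² ln(1 + 2q cos(ατ + β) + q²) ≤ 2α²q/(1 − q)²`. -/
theorem stmt_2 (q α β : ℝ) (hq0 : 0 < q) (hq1 : q < 1) (τ : ℝ) :
    deriv (deriv (fun t : ℝ => Real.log (1 + 2 * q * Real.cos (α * t + β) + q ^ 2))) τ ≤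
      2 * α ^ 2 * q / (1 - q) ^ 2 := by
  simpa only [abs_of_pos hq0] using
    stmt_2_general ((abs_of_pos hq0).trans_ne hq1.ne) α β τ
end

section
/- Let s > 0 be real and let n be a positive integer. For every real k satisfying 30 n e^{−s} ≤ k ≤ 4n e^{−1}, one has Σ_{x ∈ ℤ^n, ‖x‖² ≥ k} e^{−s‖x‖²} ≤ e^{−k}. -/
/-!
The lattice sum is bounded by a Chernoff argument. For `t ≤ s`, on the region `‖x‖² ≥ k` one has
`e^{-s‖x‖²} ≤ e^{-(s-t)k} e^{-t‖x‖²}`, and the sum of `e^{-t‖x‖²}` over the whole lattice is the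
`n`-th power of a one-dimensional sum, which is at most `(1 + q) / (1 - q)` with `q = e^{-t}`.
Take `q = k / (4n)`. The upper bound on `k` gives `q ≤ 1/2`, so that `(1 + q) / (1 - q) ≤ e^{4q}`
and the whole lattice contributes at most `e^{4qn} = e^k`; the lower bound gives `s - t ≥ 2`, so
that the other factor is at most `e^{-2k}`.
-/

section ProductSums

variable {ι : Type*} [Fintype ι] {κ : ι → Type*} {f : ∀ i, κ i → ℝ}

theorem sum_prod_le_prod_tsum (hf : ∀ i z, 0 ≤ f i z) (hsum : ∀ i, Summable (f i))
    (S : Finset (∀ i, κ i)) : ∑ x ∈ S, ∏ i, f i (x i) ≤ ∏ i, ∑' z, f i z := by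
  classical
  let proj (i : ι) : Finset (κ i) := S.image (· i)
  have S_subset : S ⊆ Fintype.piFinset proj := fun x hx =>
    Fintype.mem_piFinset.2 fun i => Finset.mem_image_of_mem (· i) hx
  calc ∑ x ∈ S, ∏ i, f i (x i)
      ≤ ∑ x ∈ Fintype.piFinset proj, ∏ i, f i (x i) :=
        Finset.sum_le_sum_of_subset_of_nonneg S_subset fun x _ _ =>
          Finset.prod_nonneg fun i _ => hf i (x i)
    _ = ∏ i, ∑ z ∈ proj i, f i z := (Finset.prod_univ_sum proj f).symm
    _ ≤ ∏ i, ∑' z, f i z :=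
        Finset.prod_le_prod (fun i _ => Finset.sum_nonneg fun z _ => hf i z)
          fun i _ => (hsum i).sum_le_tsum _ fun z _ => hf i z

theorem summable_prod_pi (hf : ∀ i z, 0 ≤ f i z) (hsum : ∀ i, Summable (f i)) :
    Summable fun x : ∀ i, κ i => ∏ i, f i (x i) :=
  summable_of_sum_le (fun x => Finset.prod_nonneg fun i _ => hf i (x i))
    (sum_prod_le_prod_tsum hf hsum)

theorem tsum_prod_pi_le_prod_tsum (hf : ∀ i z, 0 ≤ f i z) (hsum : ∀ i, Summable (f i)) :
    ∑' x : ∀ i, κ i, ∏ i, f i (x i) ≤ ∏ i, ∑' z, f i z :=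
  (summable_prod_pi hf hsum).tsum_le_of_sum_le (sum_prod_le_prod_tsum hf hsum)

end ProductSums

theorem one_add_div_one_sub_le_exp_four_mul {q : ℝ} (hq₀ : 0 ≤ q) (hq : q ≤ 1 / 2) :
    (1 + q) / (1 - q) ≤ Real.exp (4 * q) := by
  calc (1 + q) / (1 - q) ≤ 4 * q + 1 := by
        rw [div_le_iff₀ (by linarith)]
        nlinarith
    _ ≤ Real.exp (4 * q) := Real.add_one_le_exp _

section GaussianSums

variable {ι : Type*} [Fintype ι] {t : ℝ}

theorem hasSum_pow_natAbs {K : Type*} [NormedDivisionRing K] {q : K} (hq : ‖q‖ < 1) :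
    HasSum (fun z : ℤ => q ^ z.natAbs) ((1 + q) / (1 - q)) := by
  have hnonneg : HasSum (fun m : ℕ => q ^ (m : ℤ).natAbs) (1 - q)⁻¹ :=
    hasSum_geometric_of_norm_lt_one hq
  have hneg : HasSum (fun m : ℕ => q ^ (-((m : ℤ) + 1)).natAbs) (q * (1 - q)⁻¹) := by
    have natAbs_neg_succ (m : ℕ) : (-((m : ℤ) + 1)).natAbs = m + 1 := by omega
    simpa only [natAbs_neg_succ, pow_succ'] using
      (hasSum_geometric_of_norm_lt_one hq).mul_left q
  rw [div_eq_mul_inv, add_mul, one_mul]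
  exact HasSum.of_nat_of_neg_add_one hnonneg hneg

theorem exp_neg_mul_int_sq_le_pow_natAbs (ht : 0 ≤ t) (z : ℤ) :
    Real.exp (-t * (z : ℝ) ^ 2) ≤ Real.exp (-t) ^ z.natAbs := by
  have natAbs_le_sq : (z.natAbs : ℝ) ≤ (z : ℝ) ^ 2 := by
    simpa only [Int.cast_natCast, Int.cast_pow] using
      Int.cast_le (R := ℝ).2 (Int.natAbs_le_self_sq z)
  rw [← Real.exp_nat_mul, Real.exp_le_exp]
  linarith [mul_le_mul_of_nonneg_left natAbs_le_sq ht]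

theorem hasSum_exp_neg_pow_natAbs (ht : 0 < t) :
    HasSum (fun z : ℤ => Real.exp (-t) ^ z.natAbs)
      ((1 + Real.exp (-t)) / (1 - Real.exp (-t))) :=
  hasSum_pow_natAbs <| by rwa [Real.norm_eq_abs, Real.abs_exp, Real.exp_lt_one_iff, neg_lt_zero]

theorem summable_exp_neg_mul_int_sq (ht : 0 < t) :
    Summable fun z : ℤ => Real.exp (-t * (z : ℝ) ^ 2) :=
  (hasSum_exp_neg_pow_natAbs ht).summable.of_nonneg_of_le (fun _ => Real.exp_nonneg _)
    (exp_neg_mul_int_sq_le_pow_natAbs ht.le)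

theorem tsum_exp_neg_mul_int_sq_le (ht : 0 < t) :
    ∑' z : ℤ, Real.exp (-t * (z : ℝ) ^ 2) ≤ (1 + Real.exp (-t)) / (1 - Real.exp (-t)) :=
  hasSum_le (exp_neg_mul_int_sq_le_pow_natAbs ht.le) (summable_exp_neg_mul_int_sq ht).hasSum
    (hasSum_exp_neg_pow_natAbs ht)

theorem exp_mul_sum_sq_eq_prod (a : ℝ) (x : ι → ℝ) :
    Real.exp (a * ∑ i, x i ^ 2) = ∏ i, Real.exp (a * x i ^ 2) := by
  rw [Finset.mul_sum, Real.exp_sum]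

theorem summable_exp_neg_mul_sum_sq (ht : 0 < t) :
    Summable fun x : ι → ℤ => Real.exp (-t * ∑ i, (x i : ℝ) ^ 2) := by
  simpa only [exp_mul_sum_sq_eq_prod] using
    summable_prod_pi (fun (_ : ι) _ => Real.exp_nonneg _) fun _ => summable_exp_neg_mul_int_sq ht

theorem tsum_exp_neg_mul_sum_sq_le (ht : 0 < t) :
    ∑' x : ι → ℤ, Real.exp (-t * ∑ i, (x i : ℝ) ^ 2) ≤
      ((1 + Real.exp (-t)) / (1 - Real.exp (-t))) ^ Fintype.card ι := by
  calc ∑' x : ι → ℤ, Real.exp (-t * ∑ i, (x i : ℝ) ^ 2)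
      = ∑' x : ι → ℤ, ∏ i, Real.exp (-t * (x i : ℝ) ^ 2) := by
        simp only [exp_mul_sum_sq_eq_prod]
    _ ≤ ∏ _i : ι, ∑' z : ℤ, Real.exp (-t * (z : ℝ) ^ 2) :=
        tsum_prod_pi_le_prod_tsum (fun _ _ => Real.exp_nonneg _)
          fun _ => summable_exp_neg_mul_int_sq ht
    _ = (∑' z : ℤ, Real.exp (-t * (z : ℝ) ^ 2)) ^ Fintype.card ι := by
        rw [Finset.prod_const, Finset.card_univ]
    _ ≤ ((1 + Real.exp (-t)) / (1 - Real.exp (-t))) ^ Fintype.card ι :=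
        pow_le_pow_left₀ (tsum_nonneg fun _ => Real.exp_nonneg _)
          (tsum_exp_neg_mul_int_sq_le ht) _

theorem tsum_exp_neg_mul_sum_sq_le_exp (ht : Real.exp (-t) ≤ 1 / 2) :
    ∑' x : ι → ℤ, Real.exp (-t * ∑ i, (x i : ℝ) ^ 2) ≤
      Real.exp (4 * Fintype.card ι * Real.exp (-t)) := by
  have t_pos : 0 < t := neg_lt_zero.1 (Real.exp_lt_one_iff.1 (by linarith))
  calc ∑' x : ι → ℤ, Real.exp (-t * ∑ i, (x i : ℝ) ^ 2)
      ≤ ((1 + Real.exp (-t)) / (1 - Real.exp (-t))) ^ Fintype.card ι :=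
        tsum_exp_neg_mul_sum_sq_le t_pos
    _ ≤ Real.exp (4 * Real.exp (-t)) ^ Fintype.card ι :=
        pow_le_pow_left₀ (div_nonneg (by positivity) (by linarith))
          (one_add_div_one_sub_le_exp_four_mul (Real.exp_nonneg _) ht) _
    _ = Real.exp (4 * Fintype.card ι * Real.exp (-t)) := by
        rw [← Real.exp_nat_mul]
        ring_nf

end GaussianSums

theorem tsum_superlevel_exp_neg_mul_le {α : Type*} {f : α → ℝ} {s t : ℝ} (hts : t ≤ s) (k : ℝ)
    (hsum : Summable fun x => Real.exp (-t * f x)) :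
    ∑' x : {x // k ≤ f x}, Real.exp (-s * f x) ≤
      Real.exp (-(s - t) * k) * ∑' x, Real.exp (-t * f x) := by
  have exp_le (x : {x // k ≤ f x}) :
      Real.exp (-s * f x) ≤ Real.exp (-(s - t) * k) * Real.exp (-t * f x) := by
    rw [← Real.exp_add, Real.exp_le_exp]
    linarith [mul_le_mul_of_nonneg_left x.2 (sub_nonneg.2 hts)]
  have hsum_subtype : Summable fun x : {x // k ≤ f x} =>
      Real.exp (-(s - t) * k) * Real.exp (-t * f x) :=
    (hsum.subtype {x | k ≤ f x}).mul_left _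
  calc ∑' x : {x // k ≤ f x}, Real.exp (-s * f x)
      ≤ ∑' x : {x // k ≤ f x}, Real.exp (-(s - t) * k) * Real.exp (-t * f x) :=
        (hsum_subtype.of_nonneg_of_le (fun _ => Real.exp_nonneg _) exp_le).tsum_le_tsum
          exp_le hsum_subtype
    _ = Real.exp (-(s - t) * k) * ∑' x : {x // k ≤ f x}, Real.exp (-t * f x) := tsum_mul_left
    _ ≤ Real.exp (-(s - t) * k) * ∑' x, Real.exp (-t * f x) := by
        gcongr
        exact hsum.tsum_subtype_le _ {x | k ≤ f x} fun _ => Real.exp_nonneg _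

theorem stmt_7_general {ι : Type*} [Fintype ι] [Nonempty ι] {s k : ℝ}
    (hk_lower : 4 * Real.exp 2 * Fintype.card ι * Real.exp (-s) ≤ k)
    (hk_upper : k ≤ 2 * Fintype.card ι) :
    ∑' x : {x : ι → ℤ // k ≤ ∑ i, (x i : ℝ) ^ 2},
      Real.exp (-s * ∑ i, (x.1 i : ℝ) ^ 2) ≤ Real.exp (-k) := by
  set n : ℝ := (Fintype.card ι : ℝ)
  have : 0 < n := Nat.cast_pos.2 Fintype.card_pos
  have : 0 < k := lt_of_lt_of_le (by positivity) hk_lower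
  obtain ⟨t, ht⟩ : ∃ t, 4 * n * Real.exp (-t) = k :=
    ⟨-Real.log (k / (4 * n)), by
      rw [neg_neg, Real.exp_log (by positivity), mul_div_cancel₀ _ (by positivity)]⟩
  have exp_neg_t_le : Real.exp (-t) ≤ 1 / 2 :=
    le_of_mul_le_mul_left (a := 4 * n) (by linarith) (by positivity)
  have t_pos : 0 < t := neg_lt_zero.1 (Real.exp_lt_one_iff.1 (by linarith))
  have two_le_sub : 2 ≤ s - t := by
    have : Real.exp (2 + -s) ≤ Real.exp (-t) := by
      rw [Real.exp_add]
      exact le_of_mul_le_mul_left (a := 4 * n) (by linarith) (by positivity)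
    linarith [Real.exp_le_exp.1 this]
  have full_sum_le : ∑' x : ι → ℤ, Real.exp (-t * ∑ i, (x i : ℝ) ^ 2) ≤ Real.exp k :=
    ht ▸ tsum_exp_neg_mul_sum_sq_le_exp exp_neg_t_le
  calc _ ≤ Real.exp (-(s - t) * k) * ∑' x : ι → ℤ, Real.exp (-t * ∑ i, (x i : ℝ) ^ 2) :=
        tsum_superlevel_exp_neg_mul_le (by linarith) k (summable_exp_neg_mul_sum_sq t_pos)
    _ ≤ Real.exp (-2 * k) * Real.exp k := by gcongr
    _ = Real.exp (-k) := by rw [← Real.exp_add]; ring_nf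

/-- Let `s > 0` be real and `n` a positive integer. For every real `k` with
`30 n e^{−s} ≤ k ≤ 4 n e^{−1}`, one has `Σ_{x ∈ ℤⁿ, ‖x‖² ≥ k} e^{−s‖x‖²} ≤ e^{−k}`. -/
theorem stmt_7 (n : ℕ) (hn : 0 < n) (s : ℝ) (hs : 0 < s) (k : ℝ)
    (hk1 : 30 * n * Real.exp (-s) ≤ k) (hk2 : k ≤ 4 * n * Real.exp (-1)) :
    (∑' x : {x : Fin n → ℤ // k ≤ ∑ i, (x i : ℝ) ^ 2},
        Real.exp (-s * ∑ i, ((x : Fin n → ℤ) i : ℝ) ^ 2)) ≤ Real.exp (-k) := by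
  have : Nonempty (Fin n) := Fin.pos_iff_nonempty.1 hn
  have four_mul_exp_two_le : 4 * Real.exp 2 ≤ 30 := by
    rw [show (2 : ℝ) = 1 + 1 by norm_num, Real.exp_add]
    nlinarith [Real.exp_one_lt_d9, Real.exp_pos 1]
  have exp_neg_one_le : Real.exp (-1) ≤ 1 / 2 := by linarith [Real.exp_neg_one_lt_d9]
  apply stmt_7_general <;> rw [Fintype.card_fin]
  · exact hk1.trans' (by gcongr)
  · nlinarith [hk2, exp_neg_one_le, (Nat.cast_nonneg n : (0 : ℝ) ≤ n)]
end

section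
/- Let y ∈ ℝ^n and let 0 < τ ≤ 1. Define Θ(τI, y) = Σ_{x ∈ ℤ^n} e^{−τ‖x − y‖²}, Θ(τI) = Σ_{x ∈ ℤ^n} e^{−τ‖x‖²}, and dist(y, ℤ^n) = min_{x ∈ ℤ^n} ‖x − y‖. Then exp(−41 e^{−π²/τ} dist²(y, ℤ^n)) ≤ Θ(τI, y)/Θ(τI) ≤ exp(−13 e^{−π²/τ} dist²(y, ℤ^n)). -/
/-- The integer vector `x ∈ ℤⁿ` viewed as a point of Euclidean space `ℝⁿ`. -/
noncomputable def intVec (n : ℕ) (x : Fin n → ℤ) : EuclideanSpace ℝ (Fin n) :=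
  (WithLp.equiv 2 (Fin n → ℝ)).symm (fun i => (x i : ℝ))

/-!
Poisson summation turns the one-dimensional sum `∑ₖ exp (-τ (k - y)²)` into `√(π/τ)` times the
dual series `K y t = 1 + 2 ∑ₘ cos (2π m y) qᵐ²` (sum over `m ≥ 1`), where `t = π / τ` and
`q = exp (-π t) = exp (-π² / τ)`; this is Mathlib's `HurwitzZeta.cosKernel`. As `q` is tiny, the
defect `K 0 t - K y t = 2 ∑ₘ (1 - cos (2π m y)) qᵐ²` is governed by its first term, which lies
between `16 q ‖y‖²` and `4π² q ‖y‖²` for `‖y‖` the distance from `y` to `ℤ`; passing to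
`K y t / K 0 t` and to exponentials turns `16` into `13` and `4π² < 40` into `41`. In dimension
`n` both the theta sum and `exp (c dist²)` are products over the coordinates.
-/

section ProductOfSeries

variable {R : Type*} [NormedCommRing R]

lemma summable_norm_and_hasSum_prod_fin_pi {n : ℕ} {κ : Fin n → Type*} {f : ∀ i, κ i → R}
    {s : Fin n → R} (hf : ∀ i, Summable fun k => ‖f i k‖) (hs : ∀ i, HasSum (f i) (s i)) :
    Summable (fun x : ∀ i, κ i => ‖∏ i, f i (x i)‖) ∧
      HasSum (fun x : ∀ i, κ i => ∏ i, f i (x i)) (∏ i, s i) := by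
  induction n with
  | zero => exact ⟨(hasSum_fintype _).summable, by simp⟩
  | succ n ih =>
    let tail : (∀ i : Fin n, κ i.succ) → R := fun x => ∏ i, f i.succ (x i)
    obtain ⟨hsummable, hsum⟩ : Summable (fun x => ‖tail x‖) ∧ HasSum tail (∏ i, s i.succ) :=
      ih (fun i => hf i.succ) (fun i => hs i.succ)
    have hprod (p : κ 0 × ∀ i : Fin n, κ i.succ) :
        ∏ i, f i (Fin.consEquiv κ p i) = f 0 p.1 * tail p.2 :=
      Fin.prod_univ_succ fun i => f i (Fin.consEquiv κ p i)
    rw [← (Fin.consEquiv κ).summable_iff, ← (Fin.consEquiv κ).hasSum_iff, Fin.prod_univ_succ s]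
    simp only [Function.comp_def, hprod]
    exact ⟨(hf 0).mul_norm hsummable, (hs 0).mul hsum
      (summable_mul_of_summable_norm' (hf 0) (hs 0).summable hsummable hsum.summable)⟩

theorem summable_norm_and_hasSum_prod_pi {ι : Type*} [Fintype ι] {κ : ι → Type*}
    {f : ∀ i, κ i → R} {s : ι → R}
    (hf : ∀ i, Summable fun k => ‖f i k‖) (hs : ∀ i, HasSum (f i) (s i)) :
    Summable (fun x : ∀ i, κ i => ‖∏ i, f i (x i)‖) ∧
      HasSum (fun x : ∀ i, κ i => ∏ i, f i (x i)) (∏ i, s i) := by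
  let e := (Fintype.equivFin ι).symm
  let reindex := (Equiv.piCongrLeft κ e).symm
  obtain ⟨hsummable, hsum⟩ :=
    summable_norm_and_hasSum_prod_fin_pi (fun j => hf (e j)) (fun j => hs (e j))
  have hprod (x : ∀ i, κ i) : ∏ j, f (e j) (reindex x j) = ∏ i, f i (x i) :=
    e.prod_comp fun i => f i (x i)
  rw [← reindex.summable_iff] at hsummable
  rw [← reindex.hasSum_iff, e.prod_comp s] at hsum
  simp only [Function.comp_def, hprod] at hsummable hsum
  exact ⟨hsummable, hsum⟩

end ProductOfSeries

section CosKernel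

open Real HurwitzZeta

variable {t : ℝ}

lemma pos_of_exp_neg_pi_mul_lt_one (hq : exp (-π * t) < 1) : 0 < t := by
  rw [exp_lt_one_iff] at hq
  nlinarith [pi_pos]

lemma exp_neg_pi_mul_sq_mul (k : ℕ) : exp (-π * k ^ 2 * t) = exp (-π * t) ^ k ^ 2 := by
  rw [← exp_nat_mul]
  push_cast
  ring_nf

lemma succ_sq_mul_pow_succ_sq_le {q : ℝ} (hq0 : 0 ≤ q) (hq1 : q ≤ 1) (m : ℕ) :
    ((m : ℝ) + 1) ^ 2 * q ^ (m + 1) ^ 2 ≤ q * (4 * q ^ 2) ^ m := by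
  have hm : (m : ℝ) + 1 ≤ 2 ^ m := by exact_mod_cast Nat.lt_two_pow_self (n := m)
  calc ((m : ℝ) + 1) ^ 2 * q ^ (m + 1) ^ 2 ≤ (2 ^ m) ^ 2 * q ^ (2 * m + 1) := by
        gcongr ?_ ^ 2 * ?_
        exact pow_le_pow_of_le_one hq0 hq1 (by nlinarith)
    _ = q * (4 * q ^ 2) ^ m := by
        rw [mul_pow, ← pow_mul, ← pow_mul, mul_comm m 2, pow_mul (2 : ℝ) 2 m]
        norm_num
        ring

lemma hasSum_cosKernel_zero_sub (ht : 0 < t) (d : ℝ) :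
    HasSum (fun m : ℕ => 2 * (1 - cos (2 * π * d * (m + 1))) * exp (-π * (m + 1) ^ 2 * t))
      (cosKernel 0 t - cosKernel d t) := by
  have h := (hasSum_nat_cosKernel₀ 0 ht).sub (hasSum_nat_cosKernel₀ d ht)
  rw [sub_sub_sub_cancel_right, AddCircle.coe_zero] at h
  refine h.congr_fun fun m => ?_
  simp only [mul_zero, zero_mul, cos_zero]
  ring

lemma mul_sq_le_cosKernel_zero_sub (ht : 0 < t) {d : ℝ} (hd : |d| ≤ 1 / 2) :
    16 * exp (-π * t) * d ^ 2 ≤ cosKernel 0 t - cosKernel d t := by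
  have hnonneg (m : ℕ) :
      0 ≤ 2 * (1 - cos (2 * π * d * (m + 1))) * exp (-π * (m + 1) ^ 2 * t) :=
    mul_nonneg (by linarith [cos_le_one (2 * π * d * (m + 1))]) (exp_pos _).le
  have hcos : 8 * d ^ 2 ≤ 1 - cos (2 * π * d) := by
    have harg : |2 * π * d| ≤ π := by
      rw [abs_mul, abs_of_pos two_pi_pos]
      nlinarith [pi_pos]
    calc 8 * d ^ 2 = 2 / π ^ 2 * (2 * π * d) ^ 2 := by
          field_simp
          ring
      _ ≤ 1 - cos (2 * π * d) := by linarith [cos_le_one_sub_mul_cos_sq harg]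
  calc 16 * exp (-π * t) * d ^ 2 = 2 * (8 * d ^ 2) * exp (-π * t) := by ring
    _ ≤ 2 * (1 - cos (2 * π * d)) * exp (-π * t) := by gcongr
    _ ≤ cosKernel 0 t - cosKernel d t := by
      simpa using le_hasSum (hasSum_cosKernel_zero_sub ht d) 0 fun m _ => hnonneg m

lemma cosKernel_zero_sub_le (hq : exp (-π * t) < 1 / 2) (d : ℝ) :
    cosKernel 0 t - cosKernel d t ≤
      4 * π ^ 2 * d ^ 2 * exp (-π * t) * (1 - 4 * exp (-π * t) ^ 2)⁻¹ := by
  have hq1 : exp (-π * t) < 1 := hq.trans one_half_lt_one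
  have hratio : 4 * exp (-π * t) ^ 2 < 1 := by nlinarith [exp_pos (-π * t)]
  refine hasSum_le (fun m => ?_) (hasSum_cosKernel_zero_sub (pos_of_exp_neg_pi_mul_lt_one hq1) d)
    ((hasSum_geometric_of_lt_one (by positivity) hratio).mul_left _)
  have hcos : 1 - cos (2 * π * d * (m + 1)) ≤ (2 * π * d * (m + 1)) ^ 2 / 2 := by
    linarith [one_sub_sq_div_two_le_cos (x := 2 * π * d * (m + 1))]
  calc 2 * (1 - cos (2 * π * d * (m + 1))) * exp (-π * (m + 1) ^ 2 * t)
      ≤ 2 * ((2 * π * d * (m + 1)) ^ 2 / 2) * exp (-π * (m + 1) ^ 2 * t) := by gcongr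
    _ = 4 * π ^ 2 * d ^ 2 * (((m : ℝ) + 1) ^ 2 * exp (-π * t) ^ (m + 1) ^ 2) := by
        rw [← exp_neg_pi_mul_sq_mul]
        push_cast
        ring
    _ ≤ 4 * π ^ 2 * d ^ 2 * (exp (-π * t) * (4 * exp (-π * t) ^ 2) ^ m) := by
        gcongr ?_ * ?_
        exact succ_sq_mul_pow_succ_sq_le (exp_pos _).le hq1.le m
    _ = 4 * π ^ 2 * d ^ 2 * exp (-π * t) * (4 * exp (-π * t) ^ 2) ^ m := by ring

lemma one_le_cosKernel_zero (ht : 0 < t) : 1 ≤ cosKernel 0 t := by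
  have h := hasSum_nat_cosKernel₀ 0 ht
  simp only [mul_zero, zero_mul, cos_zero, mul_one] at h
  exact sub_nonneg.mp (h.nonneg fun m => by positivity)

lemma cosKernel_zero_sub_one_le (ht : 0 < t) :
    cosKernel 0 t - 1 ≤ 2 / (1 - exp (-π * t)) * exp (-π * t) := by
  have htheta : ((cosKernel 0 t - 1 : ℝ) : ℂ) = jacobiTheta (Complex.I * t) - 1 := by
    rw [jacobiTheta_eq_jacobiTheta₂, ← Complex.ofReal_zero, ← cosKernel_def]
    simp
  have hbound := norm_jacobiTheta_sub_one_le (τ := Complex.I * t) (by simpa using ht)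
  rw [← htheta, Complex.norm_real] at hbound
  simpa using (le_norm_self _).trans hbound

lemma exists_coe_addCircle_eq_and_abs_eq_norm {p : ℝ} (a : AddCircle p) :
    ∃ d : ℝ, (d : AddCircle p) = a ∧ |d| = ‖a‖ := by
  obtain ⟨y, rfl⟩ := QuotientAddGroup.mk_surjective a
  refine ⟨y - round (p⁻¹ * y) * p, ?_, (AddCircle.norm_eq p).symm⟩
  rw [← sub_eq_zero, ← AddCircle.coe_sub, AddCircle.coe_eq_zero_iff]
  exact ⟨-round (p⁻¹ * y), by simp⟩

lemma exp_neg_mul_le_one_sub_mul {a : ℝ} (ha0 : 0 ≤ a) (ha1 : a ≤ 1 / 1640) :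
    exp (-41 * a) ≤ 1 - 40 * a := by
  rw [neg_mul, exp_neg, inv_le_iff_one_le_mul₀ (exp_pos _)]
  calc 1 ≤ (1 - 40 * a) * (41 * a + 1) := by nlinarith
    _ ≤ (1 - 40 * a) * exp (41 * a) := by
      gcongr
      · linarith
      · exact add_one_le_exp _

lemma cosKernel_zero_sub_le_mul_sq (hq : exp (-π * t) ≤ 1 / 1000) (d : ℝ) :
    cosKernel 0 t - cosKernel d t ≤ 40 * (exp (-π * t) * d ^ 2) := by
  have hq2 : 4 * exp (-π * t) ^ 2 ≤ 1 / 250000 := by nlinarith [exp_pos (-π * t)]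
  have hpi : 4 * π ^ 2 * (1 - 4 * exp (-π * t) ^ 2)⁻¹ ≤ 40 := by
    rw [← div_eq_mul_inv, div_le_iff₀ (by linarith)]
    nlinarith [pi_gt_three, pi_lt_d4]
  calc cosKernel 0 t - cosKernel d t
      ≤ 4 * π ^ 2 * d ^ 2 * exp (-π * t) * (1 - 4 * exp (-π * t) ^ 2)⁻¹ :=
        cosKernel_zero_sub_le (hq.trans_lt (by norm_num)) d
    _ = 4 * π ^ 2 * (1 - 4 * exp (-π * t) ^ 2)⁻¹ * (exp (-π * t) * d ^ 2) := by ring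
    _ ≤ 40 * (exp (-π * t) * d ^ 2) := by gcongr

theorem exp_le_cosKernel_div_cosKernel_zero (hq : exp (-π * t) ≤ 1 / 1000) (a : UnitAddCircle) :
    exp (-41 * exp (-π * t) * ‖a‖ ^ 2) ≤ cosKernel a t / cosKernel 0 t := by
  have ht : 0 < t := pos_of_exp_neg_pi_mul_lt_one (hq.trans_lt (by norm_num))
  have hK := one_le_cosKernel_zero ht
  have hhalf : ‖a‖ ≤ 1 / 2 := by simpa using AddCircle.norm_le_half_period 1 one_ne_zero (x := a)
  obtain ⟨d, rfl, hd⟩ := exists_coe_addCircle_eq_and_abs_eq_norm a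
  rw [← hd] at hhalf ⊢
  rw [sq_abs, mul_assoc]
  have hdefect := cosKernel_zero_sub_le_mul_sq hq d
  have hnonneg : 0 ≤ exp (-π * t) * d ^ 2 := by positivity
  have hsmall : exp (-π * t) * d ^ 2 ≤ 1 / 1640 :=
    calc exp (-π * t) * d ^ 2 ≤ 1 / 1000 * (1 / 2) ^ 2 := by
          rw [← sq_abs]
          gcongr
      _ ≤ 1 / 1640 := by norm_num
  calc exp (-41 * (exp (-π * t) * d ^ 2)) ≤ 1 - 40 * (exp (-π * t) * d ^ 2) :=
        exp_neg_mul_le_one_sub_mul hnonneg hsmall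
    _ ≤ cosKernel d t / cosKernel 0 t := by
        rw [le_div_iff₀ (by linarith)]
        nlinarith

theorem cosKernel_div_cosKernel_zero_le_exp (hq : exp (-π * t) ≤ 1 / 10) (a : UnitAddCircle) :
    cosKernel a t / cosKernel 0 t ≤ exp (-13 * exp (-π * t) * ‖a‖ ^ 2) := by
  have ht : 0 < t := pos_of_exp_neg_pi_mul_lt_one (hq.trans_lt (by norm_num))
  have hhalf : ‖a‖ ≤ 1 / 2 := by simpa using AddCircle.norm_le_half_period 1 one_ne_zero (x := a)
  obtain ⟨d, rfl, hd⟩ := exists_coe_addCircle_eq_and_abs_eq_norm a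
  rw [← hd] at hhalf ⊢
  rw [sq_abs]
  have hK := one_le_cosKernel_zero ht
  have hdefect := mul_sq_le_cosKernel_zero_sub ht hhalf
  have hK' : cosKernel 0 t ≤ 16 / 13 := by
    have htail : 2 / (1 - exp (-π * t)) * exp (-π * t) ≤ 3 / 13 := by
      rw [div_mul_eq_mul_div, div_le_iff₀ (by linarith)]
      linarith
    linarith [cosKernel_zero_sub_one_le ht]
  calc cosKernel d t / cosKernel 0 t ≤ -13 * exp (-π * t) * d ^ 2 + 1 := by
        rw [div_le_iff₀ (by linarith)]
        nlinarith [mul_nonneg (exp_pos (-π * t)).le (sq_nonneg d)]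
    _ ≤ exp (-13 * exp (-π * t) * d ^ 2) := add_one_le_exp _

lemma exp_neg_pi_sq_div_le {τ : ℝ} (hτ0 : 0 < τ) (hτ1 : τ ≤ 1) :
    exp (-π ^ 2 / τ) ≤ 1 / 1000 := by
  have hnine : 9 ≤ π ^ 2 / τ := by
    rw [le_div_iff₀ hτ0]
    nlinarith [pi_gt_three]
  have hexp : 1000 ≤ exp 9 :=
    le_trans (by norm_num [Nat.factorial]) (pow_div_factorial_le_exp (x := 9) (by norm_num) 9)
  rw [neg_div, exp_neg, one_div]
  exact inv_anti₀ (by norm_num) (hexp.trans (exp_le_exp.mpr hnine))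

end CosKernel

section IntegerLattice

open Real HurwitzZeta

variable {n : ℕ} {τ : ℝ}

lemma norm_intVec_sub_sq (x : Fin n → ℤ) (y : EuclideanSpace ℝ (Fin n)) :
    ‖intVec n x - y‖ ^ 2 = ∑ i, ((x i : ℝ) - y i) ^ 2 := by
  simp [EuclideanSpace.norm_sq_eq, intVec]

lemma infDist_range_intVec_sq (y : EuclideanSpace ℝ (Fin n)) :
    Metric.infDist y (Set.range (intVec n)) ^ 2 = ∑ i, ‖(y i : UnitAddCircle)‖ ^ 2 := by
  let nearest : Fin n → ℤ := fun i => round (y i)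
  have hnearest (x : Fin n → ℤ) : ‖intVec n nearest - y‖ ≤ ‖intVec n x - y‖ := by
    rw [← sq_le_sq₀ (norm_nonneg _) (norm_nonneg _), norm_intVec_sub_sq, norm_intVec_sub_sq]
    refine Finset.sum_le_sum fun i _ => sq_le_sq.mpr ?_
    simpa only [abs_sub_comm] using round_le (y i) (x i)
  have hinf : Metric.infDist y (Set.range (intVec n)) = ‖intVec n nearest - y‖ := by
    refine le_antisymm ?_ ((Metric.le_infDist (Set.range_nonempty _)).mpr ?_)
    · rw [← dist_eq_norm, dist_comm]
      exact Metric.infDist_le_dist_of_mem ⟨_, rfl⟩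
    · rintro _ ⟨x, rfl⟩
      simpa only [dist_comm y, dist_eq_norm] using hnearest x
  rw [hinf, norm_intVec_sub_sq]
  exact Finset.sum_congr rfl fun i _ => by rw [UnitAddCircle.norm_eq, sq_abs, sub_sq_comm]

lemma hasSum_exp_neg_mul_int_sub_sq (hτ : 0 < τ) (y : ℝ) :
    HasSum (fun k : ℤ => exp (-τ * (k - y) ^ 2)) (evenKernel y (τ / π)) := by
  have h := hasSum_int_evenKernel (-y) (div_pos hτ pi_pos)
  rw [AddCircle.coe_neg, evenKernel_neg] at h
  convert h using 3 with k
  field_simp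
  ring

lemma tsum_exp_neg_mul_norm_intVec_sub_sq (hτ : 0 < τ) (y : EuclideanSpace ℝ (Fin n)) :
    ∑' x : Fin n → ℤ, exp (-τ * ‖intVec n x - y‖ ^ 2) = ∏ i, evenKernel (y i) (τ / π) := by
  have hsum (i : Fin n) := hasSum_exp_neg_mul_int_sub_sq hτ (y i)
  simp only [norm_intVec_sub_sq, Finset.mul_sum, exp_sum]
  exact (summable_norm_and_hasSum_prod_pi (fun i => (hsum i).summable.norm) hsum).2.tsum_eq

lemma evenKernel_div_evenKernel {x : ℝ} (hx : 0 < x) (a b : UnitAddCircle) :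
    evenKernel a x / evenKernel b x = cosKernel a (1 / x) / cosKernel b (1 / x) := by
  rw [evenKernel_functional_equation, evenKernel_functional_equation b,
    mul_div_mul_left _ _ (one_div_ne_zero (rpow_pos_of_pos hx _).ne')]

theorem tsum_exp_neg_mul_norm_intVec_sub_sq_div (hτ : 0 < τ) (y : EuclideanSpace ℝ (Fin n)) :
    (∑' x : Fin n → ℤ, exp (-τ * ‖intVec n x - y‖ ^ 2)) /
        (∑' x : Fin n → ℤ, exp (-τ * ‖intVec n x‖ ^ 2)) =
      ∏ i, cosKernel (y i) (π / τ) / cosKernel 0 (π / τ) := by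
  have hzero : ∑' x : Fin n → ℤ, exp (-τ * ‖intVec n x‖ ^ 2) =
      ∏ _i : Fin n, evenKernel 0 (τ / π) := by
    simpa using tsum_exp_neg_mul_norm_intVec_sub_sq hτ (0 : EuclideanSpace ℝ (Fin n))
  rw [hzero, tsum_exp_neg_mul_norm_intVec_sub_sq hτ, ← Finset.prod_div_distrib]
  simp only [evenKernel_div_evenKernel (div_pos hτ pi_pos), one_div_div]

end IntegerLattice

/-- Let `y ∈ ℝⁿ` and `0 < τ ≤ 1`. With `Θ(τI, y) = Σ_{x ∈ ℤⁿ} e^{−τ‖x − y‖²}`,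
`Θ(τI) = Σ_{x ∈ ℤⁿ} e^{−τ‖x‖²}` and `dist(y, ℤⁿ) = min_{x ∈ ℤⁿ} ‖x − y‖`, one has
`exp(−41 e^{−π²/τ} dist²(y, ℤⁿ)) ≤ Θ(τI, y)/Θ(τI) ≤ exp(−13 e^{−π²/τ} dist²(y, ℤⁿ))`. -/
theorem stmt_9 (n : ℕ) (hn : 0 < n) (y : EuclideanSpace ℝ (Fin n)) (τ : ℝ)
    (hτ0 : 0 < τ) (hτ1 : τ ≤ 1) :
    Real.exp (-41 * Real.exp (-Real.pi ^ 2 / τ) *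
        (Metric.infDist y (Set.range (intVec n))) ^ 2) ≤
      (∑' x : Fin n → ℤ, Real.exp (-τ * ‖intVec n x - y‖ ^ 2)) /
        (∑' x : Fin n → ℤ, Real.exp (-τ * ‖intVec n x‖ ^ 2)) ∧
    (∑' x : Fin n → ℤ, Real.exp (-τ * ‖intVec n x - y‖ ^ 2)) /
        (∑' x : Fin n → ℤ, Real.exp (-τ * ‖intVec n x‖ ^ 2)) ≤
      Real.exp (-13 * Real.exp (-Real.pi ^ 2 / τ) *
        (Metric.infDist y (Set.range (intVec n))) ^ 2) := by
  have hexp : -Real.pi ^ 2 / τ = -Real.pi * (Real.pi / τ) := by ring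
  have hq := exp_neg_pi_sq_div_le hτ0 hτ1
  rw [hexp] at hq ⊢
  rw [tsum_exp_neg_mul_norm_intVec_sub_sq_div hτ0, infDist_range_intVec_sq,
    Finset.mul_sum, Finset.mul_sum, Real.exp_sum, Real.exp_sum]
  have hlower (i : Fin n) := exp_le_cosKernel_div_cosKernel_zero hq (y i)
  have hupper (i : Fin n) :=
    cosKernel_div_cosKernel_zero_le_exp (hq.trans (by norm_num)) (y i)
  exact ⟨Finset.prod_le_prod (fun i _ => (Real.exp_pos _).le) fun i _ => hlower i,
    Finset.prod_le_prod (fun i _ => (Real.exp_pos _).le.trans (hlower i)) fun i _ => hupper i⟩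
end
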